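/- Let R be a K-vector space, M the recursive brace operation on decorated trees, and ⋆ the induced Loday–Ronco product on decorated forests. Then ⋆ is associative with unit the empty forest 1, the deconcatenation coproduct Δ is multiplicative for ⋆ (so (T(R^𝒯), ⋆, Δ) is a bialgebra), and ⋆ is right-sided: for every p ≥ 0, (⊕_{n≥p} (R^𝒯)^{⊗n}) ⋆ T(R^𝒯) ⊆ ⊕_{n≥p} (R^𝒯)^{⊗n}. -/

import Mathlib

/-! Common setup: `R`-decorated planar rooted trees, decorated forests,
the free module `R^𝒯` they span, and the Loday–Ronco product on `T(R^𝒯)`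
induced by the recursive brace operation `M(B₊ˣ(f₁); f₂) = B₊ˣ(f₁ ⋆ f₂)`. -/

/-- Planar rooted trees with vertices decorated by elements of `R`. -/
inductive PTree (R : Type*) : Type _
  | node : R → List (PTree R) → PTree R

section

variable (K : Type*) [Field K]
variable {R : Type*}

/-- All splittings of a list into a prefix and a suffix. -/
def splits {α : Type*} (l : List α) : List (List α × List α) :=
  (List.range (l.length + 1)).map fun i => (l.take i, l.drop i)

/-- All factorizations of a list into `k` (possibly empty) consecutive factors. -/
def splitsN {α : Type*} : ℕ → List α → List (List (List α))
  | 0, l => if l.isEmpty then [[]] else []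
  | k + 1, l => (splits l).flatMap fun p => (splitsN k p.2).map fun r => p.1 :: r

/-- Decorated forests: words of decorated trees. -/
abbrev Forest (R : Type*) := List (PTree R)

/-- `B₊ˣ` : grafting of a decorated forest onto a new root decorated by `x`. -/
def Bplus (x : R) (f : Forest R) : PTree R := PTree.node x f

variable (R)

/-- The space `R^𝒯` spanned by the decorated trees. -/
abbrev TreeMod := PTree R →₀ K

/-- The space `T(R^𝒯)` of decorated forests. -/
abbrev ForestMod := Forest R →₀ K

variable {R K}

/-- The element of `T(R^𝒯)` obtained from a word whose letters are linear
combinations of decorated trees, expanding multilinearly (in particular a word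
containing the letter `0` gives `0`). -/
noncomputable def wordOf : List (TreeMod K R) → ForestMod K R
  | [] => Finsupp.single ([] : Forest R) 1
  | a :: rest => a.sum fun t c => c • Finsupp.mapDomain (List.cons t) (wordOf rest)

/-- Extension `M(F;G)` of the brace operation to pairs of forests:
`M(1;1) = 0`, `M(1;s) = s` and `M(t;G) = M(t;G)` for a single tree `t`
(so `M(t;1) = t`), `M(F;G) = 0` if `F` has more than one tree. -/
noncomputable def MextF (Mh : PTree R → Forest R → TreeMod K R) : Forest R → Forest R → TreeMod K R
  | [], [] => 0
  | [], [s] => Finsupp.single s 1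
  | [], _ :: _ :: _ => 0
  | [t], ys => Mh t ys
  | _ :: _ :: _, _ => 0

/-- The Loday–Ronco product `X ⋆ Y = Σ_{k≥1} Σ_{X=X¹⋯X^k, Y=Y¹⋯Y^k}
M(X¹;Y¹)⋯M(X^k;Y^k)` built from a brace operation `Mh` on decorated trees
(with `1 ⋆ 1 = 1`; the terms with `k > |X| + |Y|` vanish, each containing the
letter `M(1;1) = 0`). -/
noncomputable def starRHS (Mh : PTree R → Forest R → TreeMod K R) : Forest R → Forest R → ForestMod K R
  | [], [] => Finsupp.single ([] : Forest R) 1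
  | X, Y =>
    ((List.range (X.length + Y.length)).flatMap fun k =>
      (splitsN (k + 1) X).flatMap fun Xs =>
        (splitsN (k + 1) Y).map fun Ys =>
          wordOf (List.zipWith (MextF Mh) Xs Ys)).sum

/-- `Mh` and `star` satisfy the defining recursion of the brace operation on
decorated trees: `M(B₊ˣ(f₁); f₂) = B₊ˣ(f₁ ⋆ f₂)` (with `B₊ˣ` extended linearly),
where `⋆` is the Loday–Ronco product built from `Mh`. -/
def IsTreeBrace (Mh : PTree R → Forest R → TreeMod K R)
    (star : Forest R → Forest R → ForestMod K R) : Prop :=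
  (∀ (x : R) (f₁ f₂ : Forest R),
      Mh (Bplus x f₁) f₂ = Finsupp.mapDomain (Bplus x) (star f₁ f₂)) ∧
  (∀ X Y : Forest R, star X Y = starRHS Mh X Y)

end

open scoped TensorProduct

section

variable {K : Type*} [Field K] {R : Type*}

/-- Bilinear extension of `⋆` to `T(R^𝒯)`. -/
noncomputable def starLin (star : Forest R → Forest R → ForestMod K R)
    (a b : ForestMod K R) : ForestMod K R :=
  a.sum fun X c => b.sum fun Y d => (c * d) • star X Y

/-- The deconcatenation coproduct `Δ(t₁⋯tₙ) = Σᵢ (t₁⋯tᵢ) ⊗ (t_{i+1}⋯tₙ)` on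
`T(R^𝒯)`, extended linearly. -/
noncomputable def deconc (a : ForestMod K R) : ForestMod K R ⊗[K] ForestMod K R :=
  a.sum fun f c => c •
    ∑ i ∈ Finset.range (f.length + 1),
      Finsupp.single (f.take i) (1 : K) ⊗ₜ[K] Finsupp.single (f.drop i) (1 : K)

section Aux

/-- Sum over all splittings of a list. -/
def spl {α V : Type*} [AddCommMonoid V] (l : List α) (f : List α → List α → V) : V :=
  ∑ i ∈ Finset.range (l.length + 1), f (l.take i) (l.drop i)

theorem spl_nil {α V : Type*} [AddCommMonoid V] (f : List α → List α → V) :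
    spl [] f = f [] [] := by simp [spl]

theorem spl_cons {α V : Type*} [AddCommMonoid V] (a : α) (l : List α)
    (f : List α → List α → V) :
    spl (a :: l) f = f [] (a :: l) + spl l (fun p q => f (a :: p) q) := by
  unfold spl
  rw [List.length_cons, Finset.sum_range_succ', add_comm]
  simp

theorem spl_congr {α V : Type*} [AddCommMonoid V] (l : List α)
    {f g : List α → List α → V} (h : ∀ p q, p ++ q = l → f p q = g p q) :
    spl l f = spl l g :=
  Finset.sum_congr rfl fun i _ => h _ _ (List.take_append_drop i l)

theorem spl_add {α V : Type*} [AddCommMonoid V] (l : List α) (f g : List α → List α → V) :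
    spl l (fun p q => f p q + g p q) = spl l f + spl l g := Finset.sum_add_distrib

theorem spl_comm {α β V : Type*} [AddCommMonoid V] (l : List α) (m : List β)
    (f : List α → List α → List β → List β → V) :
    spl l (fun p q => spl m fun r s => f p q r s) =
      spl m (fun r s => spl l fun p q => f p q r s) := Finset.sum_comm

theorem spl_zero {α V : Type*} [AddCommMonoid V] (l : List α) :
    spl l (fun _ _ => (0 : V)) = 0 := by simp [spl]

theorem map_spl {α V W F : Type*} [AddCommMonoid V] [AddCommMonoid W] [FunLike F V W]
    [AddMonoidHomClass F V W] (φ : F) (l : List α) (f : List α → List α → V) :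
    φ (spl l f) = spl l (fun p q => φ (f p q)) := by simp [spl, map_sum]

theorem spl_coassoc {α V : Type*} [AddCommMonoid V] (l : List α)
    (f : List α → List α → List α → V) :
    spl l (fun p q => spl q fun r s => f p r s) =
      spl l (fun p q => spl p fun r s => f r s q) := by
  induction l generalizing f with
  | nil => simp [spl_nil]
  | cons a l ih =>
    simp only [spl_cons, spl_nil, spl_add]
    rw [ih (fun p r s => f (a :: p) r s), add_assoc]

theorem spl_left {α V : Type*} [AddCommMonoid V] (l : List α) (f : List α → List α → V)
    (h : ∀ p q, p ≠ [] → f p q = 0) : spl l f = f [] l := by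
  cases l with
  | nil => simp [spl_nil]
  | cons a l =>
    rw [spl_cons, spl_congr l (g := fun _ _ => 0) (fun p q _ => h _ _ (by simp)), spl_zero,
      add_zero]

theorem spl_right {α V : Type*} [AddCommMonoid V] (l : List α) (f : List α → List α → V)
    (h : ∀ p q, q ≠ [] → f p q = 0) : spl l f = f l [] := by
  induction l generalizing f with
  | nil => simp [spl_nil]
  | cons a l ih =>
    rw [spl_cons, h _ _ (by simp), zero_add, ih _ (fun p q hq => h _ _ hq)]

/-- Left concatenation by a combination of trees. -/
noncomputable def catL : TreeMod K R →ₗ[K] ForestMod K R →ₗ[K] ForestMod K R :=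
  Finsupp.linearCombination K (fun t => Finsupp.lmapDomain K K (List.cons t))

theorem catL_single (t : PTree R) (f : Forest R) :
    catL (Finsupp.single t (1 : K)) (Finsupp.single f 1) = Finsupp.single (t :: f) 1 := by
  simp [catL]

theorem wordOf_cons (a : TreeMod K R) (r : List (TreeMod K R)) :
    wordOf (a :: r) = catL a (wordOf r) := by
  simp [wordOf, catL, Finsupp.linearCombination_apply, Finsupp.sum, LinearMap.sum_apply]

/-- The part of the product with `k` factors. -/
noncomputable def Spart (Mh : PTree R → Forest R → TreeMod K R) (k : ℕ) (X Y : Forest R) :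
    ForestMod K R :=
  ((splitsN k X).map fun Xs => ((splitsN k Y).map fun Ys =>
          wordOf (List.zipWith (MextF Mh) Xs Ys)).sum).sum

theorem sum_flatMap_aux {α V : Type*} [AddCommMonoid V] (l : List α) (f : α → List V) :
    (l.flatMap f).sum = (l.map fun a => (f a).sum).sum := by
  induction l with
  | nil => simp
  | cons a l ih => simp [ih]

theorem list_sum_range {V : Type*} [AddCommMonoid V] (n : ℕ) (f : ℕ → V) :
    ((List.range n).map f).sum = ∑ i ∈ Finset.range n, f i := by
  induction n with
  | zero => simp
  | succ n ih => rw [List.range_succ, Finset.sum_range_succ]; simp [ih]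

theorem splitsN_succ_sum {α V : Type*} [AddCommMonoid V] (k : ℕ) (l : List α)
    (g : List (List α) → V) :
    ((splitsN (k + 1) l).map g).sum =
      spl l (fun p q => ((splitsN k q).map fun r => g (p :: r)).sum) := by
  rw [splitsN, List.map_flatMap, sum_flatMap_aux, splits, List.map_map, list_sum_range, spl]
  simp only [List.map_map, Function.comp_def]

theorem list_map_spl {α β V : Type*} [AddCommMonoid V] (L : List α) (l : List β)
    (f : α → List β → List β → V) :
    (L.map fun a => spl l (f a)).sum = spl l (fun p q => (L.map fun a => f a p q).sum) := by
  induction L with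
  | nil => simp [spl_zero]
  | cons a L ih => simp [ih, spl_add]

theorem Spart_succ (Mh : PTree R → Forest R → TreeMod K R) (k : ℕ) (X Y : Forest R) :
    Spart Mh (k + 1) X Y = spl X fun p q => spl Y fun r s =>
      catL (MextF Mh p r) (Spart Mh k q s) := by
  unfold Spart
  rw [splitsN_succ_sum]
  refine spl_congr _ fun p q _ => ?_
  simp only [splitsN_succ_sum, list_map_spl]
  refine spl_congr _ fun r s _ => ?_
  simp only [List.zipWith_cons_cons, wordOf_cons, map_list_sum, List.map_map, Function.comp_def]

theorem Spart_vanish (Mh : PTree R → Forest R → TreeMod K R) (k : ℕ) (X Y : Forest R)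
    (hk : X.length + Y.length < k) : Spart Mh k X Y = 0 := by
  induction k generalizing X Y with
  | zero => omega
  | succ k ih =>
    rw [Spart_succ]
    refine (spl_congr _ fun p q hX => (spl_congr _ fun r s hY => ?_).trans (spl_zero Y)).trans
      (spl_zero X)
    subst hX hY
    rcases p with _ | ⟨p, ps⟩
    · rcases r with _ | ⟨r, rs⟩
      · simp [MextF]
      · rw [ih _ _ (by simp at hk ⊢; omega), map_zero]
    · rw [ih _ _ (by simp at hk ⊢; omega), map_zero]

/-- Indicator of the empty forest. -/
def emp (X : Forest R) : K := if X.isEmpty then 1 else 0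

@[simp] theorem emp_nil : emp ([] : Forest R) = (1 : K) := rfl
@[simp] theorem emp_cons (x : PTree R) (X : Forest R) : emp (x :: X) = (0 : K) := rfl

theorem Spart_zero (Mh : PTree R → Forest R → TreeMod K R) (X Y : Forest R) :
    Spart Mh 0 X Y = (emp X * emp Y : K) • Finsupp.single [] 1 := by
  cases X <;> cases Y <;> simp [Spart, splitsN, wordOf]

theorem starRHS_eq (Mh : PTree R → Forest R → TreeMod K R) (X Y : Forest R) :
    starRHS Mh X Y = ∑ k ∈ Finset.range (X.length + Y.length + 1), Spart Mh k X Y := by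
  have key : ∀ n, ((List.range n).flatMap fun k =>
      (splitsN (k + 1) X).flatMap fun Xs =>
        (splitsN (k + 1) Y).map fun Ys =>
          wordOf (List.zipWith (MextF Mh) Xs Ys)).sum =
      ∑ k ∈ Finset.range n, Spart Mh (k + 1) X Y := by
    intro n
    induction n with
    | zero => simp
    | succ n ih =>
      rw [List.range_succ, List.flatMap_append, List.sum_append, ih, Finset.sum_range_succ]
      simp [sum_flatMap_aux, Spart]
  rw [Finset.sum_range_succ', ← key, Spart_zero]
  cases X <;> cases Y <;> simp [starRHS]

theorem starRHS_rec (Mh : PTree R → Forest R → TreeMod K R) (X Y : Forest R) :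
    starRHS Mh X Y = (emp X * emp Y : K) • Finsupp.single [] 1 +
      spl X fun p q => spl Y fun r s => catL (MextF Mh p r) (starRHS Mh q s) := by
  have ext : ∀ (N : ℕ) (X Y : Forest R), X.length + Y.length ≤ N →
      starRHS Mh X Y = ∑ k ∈ Finset.range (N + 1), Spart Mh k X Y := by
    intro N X Y hN
    rw [starRHS_eq]
    refine Finset.sum_subset (by intro i; simp; omega) fun k _ hk => Spart_vanish _ _ _ _ ?_
    simp at hk; omega
  rw [ext (X.length + Y.length + 1) X Y (by omega), Finset.sum_range_succ', Spart_zero, add_comm]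
  congr 1
  simp only [Spart_succ]
  unfold spl
  rw [Finset.sum_comm]
  refine Finset.sum_congr rfl fun i _ => ?_
  rw [Finset.sum_comm]
  refine Finset.sum_congr rfl fun j _ => ?_
  beta_reduce
  rw [ext (X.length + Y.length) _ _ (by simp; omega), map_sum]

/-- Bilinear version of a map on pairs of basis elements. -/
noncomputable def bil {α V : Type*} [AddCommGroup V] [Module K V] (f : α → α → V) :
    (α →₀ K) →ₗ[K] (α →₀ K) →ₗ[K] V :=
  Finsupp.linearCombination K (fun X => Finsupp.linearCombination K (f X))

theorem bil_single {α V : Type*} [AddCommGroup V] [Module K V] (f : α → α → V) (X Y : α) :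
    bil f (Finsupp.single X (1 : K)) (Finsupp.single Y 1) = f X Y := by simp [bil]

theorem starLin_eq (star : Forest R → Forest R → ForestMod K R) (a b : ForestMod K R) :
    starLin star a b = bil star a b := by
  simp [starLin, bil, Finsupp.linearCombination_apply, Finsupp.sum, LinearMap.sum_apply,
    Finset.smul_sum, mul_smul]

/-- Linear version of the coproduct. -/
noncomputable def decL : ForestMod K R →ₗ[K] ForestMod K R ⊗[K] ForestMod K R :=
  Finsupp.linearCombination K (fun f => spl f fun p q =>
    Finsupp.single p (1 : K) ⊗ₜ[K] Finsupp.single q (1 : K))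

theorem deconc_eq (a : ForestMod K R) : deconc a = decL a := by
  simp [deconc, decL, Finsupp.linearCombination_apply, spl]

theorem decL_single (f : Forest R) : decL (Finsupp.single f (1 : K)) = spl f fun p q =>
    Finsupp.single p (1 : K) ⊗ₜ[K] Finsupp.single q (1 : K) := by simp [decL]

theorem decL_catL (a : TreeMod K R) (w : ForestMod K R) :
    decL (catL a w) = Finsupp.single [] 1 ⊗ₜ[K] catL a w +
      TensorProduct.map (catL a) LinearMap.id (decL w) := by
  induction a using Finsupp.induction_linear with
  | zero => simp
  | add a b ha hb =>
    simp only [map_add, LinearMap.add_apply, ha, hb, TensorProduct.tmul_add,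
      TensorProduct.map_add_left]
    abel
  | single t c =>
    induction w using Finsupp.induction_linear with
    | zero => simp
    | add v w hv hw =>
      simp only [map_add, hv, hw, TensorProduct.tmul_add]
      abel
    | single f d =>
      rw [← mul_one c, ← mul_one d, ← smul_eq_mul c, ← smul_eq_mul d, ← Finsupp.smul_single,
        ← Finsupp.smul_single]
      simp only [map_smul, LinearMap.smul_apply, catL_single, TensorProduct.tmul_smul,
        TensorProduct.map_smul_left, decL_single, spl_cons, map_spl, TensorProduct.map_tmul,
        LinearMap.id_apply, smul_add, LinearMap.smul_apply]
      simp [spl, Finset.smul_sum]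

variable {Mh : PTree R → Forest R → TreeMod K R} {star : Forest R → Forest R → ForestMod K R}

theorem star_rec (h : IsTreeBrace Mh star) (X Y : Forest R) :
    star X Y = (emp X * emp Y : K) • Finsupp.single [] 1 +
      spl X fun p q => spl Y fun r s => catL (MextF Mh p r) (star q s) := by
  simp only [h.2]; exact starRHS_rec Mh X Y

/-- Induction over pairs of forests for terms of the recursion. -/
theorem catL_MextF_congr (p r : Forest R) (v w : ForestMod K R)
    (H : 0 < p.length + r.length → v = w) :
    catL (MextF Mh p r) v = catL (MextF Mh p r) w := by
  rcases p with _ | ⟨p, ps⟩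
  · rcases r with _ | ⟨r, rs⟩
    · simp [MextF]
    · rw [H (by simp)]
  · rw [H (by simp)]

theorem decL_star (h : IsTreeBrace Mh star) (n : ℕ) : ∀ X Y : Forest R,
    X.length + Y.length ≤ n → decL (star X Y) = spl X fun p q => spl Y fun r s =>
      star p r ⊗ₜ[K] star q s := by
  induction n using Nat.strong_induction_on with
  | _ n ih =>
  intro X Y hn
  -- the tail part
  have step : decL (star X Y) = Finsupp.single [] 1 ⊗ₜ[K] star X Y +
      spl X fun p q => spl Y fun r s => spl q fun p' q' => spl s fun r' s' =>
        catL (MextF Mh p r) (star p' r') ⊗ₜ[K] star q' s' := by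
    conv_lhs => rw [star_rec h]
    conv_rhs => rw [star_rec h X Y]
    simp only [map_add, map_smul, decL_single, spl_nil, map_spl, decL_catL, spl_add,
      TensorProduct.tmul_add, TensorProduct.tmul_smul]
    rw [add_assoc]
    congr 1
    congr 1
    · simp only [← TensorProduct.mk_apply (R := K), map_spl]
    · refine spl_congr _ fun p q hX => spl_congr _ fun r s hY => ?_
      have : TensorProduct.map (catL (MextF Mh p r)) LinearMap.id (decL (star q s)) =
          TensorProduct.map (catL (MextF Mh p r)) LinearMap.id
            (spl q fun p' q' => spl s fun r' s' => star p' r' ⊗ₜ[K] star q' s') := by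
        subst hX hY
        rcases p with _ | ⟨p, ps⟩
        · rcases r with _ | ⟨r, rs⟩
          · simp [MextF, TensorProduct.map_zero_left]
          · rw [ih (q.length + s.length) (by simp at hn; omega) _ _ le_rfl]
        · rw [ih (q.length + s.length) (by simp at hn; omega) _ _ le_rfl]
      rw [this]
      simp only [map_spl, TensorProduct.map_tmul, LinearMap.id_apply]
  rw [step]
  have e1 : (spl X fun p q => spl Y fun r s => spl q fun p' q' => spl s fun r' s' =>
        catL (MextF Mh p r) (star p' r') ⊗ₜ[K] star q' s') =
      spl X fun p q => spl Y fun r s => spl p fun p' q' => spl r fun r' s' =>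
        catL (MextF Mh p' r') (star q' s') ⊗ₜ[K] star q s := by
    calc _ = spl X fun p q => spl q fun p' q' => spl Y fun r s => spl s fun r' s' =>
        catL (MextF Mh p r) (star p' r') ⊗ₜ[K] star q' s' :=
          spl_congr _ fun p q _ => spl_comm Y q (fun r s p' q' => spl s fun r' s' =>
            catL (MextF Mh p r) (star p' r') ⊗ₜ[K] star q' s')
      _ = spl X fun p q => spl p fun p' q' => spl Y fun r s => spl s fun r' s' =>
        catL (MextF Mh p' r) (star q' r') ⊗ₜ[K] star q s' :=
          spl_coassoc X fun p p' q' => spl Y fun r s => spl s fun r' s' =>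
            catL (MextF Mh p r) (star p' r') ⊗ₜ[K] star q' s'
      _ = spl X fun p q => spl p fun p' q' => spl Y fun r s => spl r fun r' s' =>
        catL (MextF Mh p' r') (star q' s') ⊗ₜ[K] star q s :=
          spl_congr _ fun p q _ => spl_congr _ fun p' q' _ =>
            spl_coassoc Y fun r r' s' => catL (MextF Mh p' r) (star q' r') ⊗ₜ[K] star q s'
      _ = _ := spl_congr _ fun p q _ => spl_comm p Y (fun p' q' r s => spl r fun r' s' =>
            catL (MextF Mh p' r') (star q' s') ⊗ₜ[K] star q s)
  rw [e1]
  have e2 : Finsupp.single ([] : Forest R) (1 : K) ⊗ₜ[K] star X Y = spl X fun p q => spl Y fun r s =>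
      ((emp p * emp r : K) • Finsupp.single ([] : Forest R) (1 : K)) ⊗ₜ[K] star q s := by
    rw [spl_left, spl_left]
    · simp
    · intro p q hp; cases p <;> simp at hp ⊢
    · intro p q hp
      refine (spl_congr _ fun r s _ => ?_).trans (spl_zero Y)
      cases p <;> simp at hp ⊢
  rw [e2, ← spl_add]
  refine spl_congr _ fun p q _ => ?_
  rw [← spl_add]
  refine spl_congr _ fun r s _ => ?_
  conv_rhs => rw [star_rec h p r, TensorProduct.add_tmul]
  congr 1
  have : ∀ u : ForestMod K R, u ⊗ₜ[K] star q s = (TensorProduct.mk K _ _).flip (star q s) u :=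
    fun _ => rfl
  simp only [this, map_spl]

theorem nil_star (h : IsTreeBrace Mh star) (Y : Forest R) :
    star [] Y = Finsupp.single Y 1 := by
  induction Y with
  | nil => rw [star_rec h]; simp [spl_nil, MextF]
  | cons y Y ih =>
    rw [star_rec h, spl_nil, spl_cons, spl_left]
    · simp [MextF, ih, catL_single]
    · intro p q hp; cases p <;> simp [MextF] at hp ⊢

theorem star_nil (h : IsTreeBrace Mh star) (n : ℕ) : ∀ X : Forest R, sizeOf X ≤ n →
    star X [] = Finsupp.single X 1 := by
  induction n using Nat.strong_induction_on with
  | _ n ih =>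
  intro X hn
  rcases X with _ | ⟨⟨x, f⟩, X⟩
  · exact nil_star h _
  · rw [star_rec h]
    simp only [spl_nil]
    rw [spl_cons, spl_left]
    · have e1 := ih (sizeOf f) (by simp at hn; omega) f le_rfl
      have e2 := ih (sizeOf X) (by simp at hn; omega) X le_rfl
      have e3 := h.1 x f []
      rw [e1, Finsupp.mapDomain_single] at e3
      simp only [Bplus] at e3
      simp [MextF, e2, e3, catL_single]
    · intro p q hp
      cases p <;> simp [MextF] at hp ⊢

/-- Linear counit. -/
noncomputable def epsL : ForestMod K R →ₗ[K] K := Finsupp.linearCombination K emp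

/-- One-letter words. -/
noncomputable def iotaL : TreeMod K R →ₗ[K] ForestMod K R :=
  Finsupp.lmapDomain K K (fun t => [t])

/-- Projection to one-letter words. -/
noncomputable def piL : ForestMod K R →ₗ[K] TreeMod K R :=
  Finsupp.linearCombination K fun f => match f with
    | [t] => Finsupp.single t 1
    | _ => 0

theorem ext_tree_forest {V : Type*} [AddCommGroup V] [Module K V]
    (φ ψ : TreeMod K R →ₗ[K] ForestMod K R →ₗ[K] V)
    (H : ∀ t f, φ (Finsupp.single t 1) (Finsupp.single f 1) =
      ψ (Finsupp.single t 1) (Finsupp.single f 1)) : φ = ψ := by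
  ext t f; simpa using H t f

theorem ext_forest_forest {V : Type*} [AddCommGroup V] [Module K V]
    (φ ψ : ForestMod K R →ₗ[K] ForestMod K R →ₗ[K] V)
    (H : ∀ t f, φ (Finsupp.single t 1) (Finsupp.single f 1) =
      ψ (Finsupp.single t 1) (Finsupp.single f 1)) : φ = ψ := by
  ext t f; simpa using H t f

theorem epsL_catL (a : TreeMod K R) (w : ForestMod K R) : epsL (catL a w) = 0 := by
  have := ext_tree_forest (catL.compr₂ (epsL (K := K) (R := R))) 0 (fun t f => by
    simp [catL_single, epsL])
  exact LinearMap.congr_fun (LinearMap.congr_fun this a) w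

theorem piL_catL (a : TreeMod K R) (w : ForestMod K R) : piL (catL a w) = epsL w • a := by
  have := ext_tree_forest (catL.compr₂ (piL (K := K) (R := R)))
    (LinearMap.lsmul K (TreeMod K R) ∘ₗ epsL).flip (fun t f => by
      cases f <;> simp [catL_single, epsL, piL])
  exact LinearMap.congr_fun (LinearMap.congr_fun this a) w

theorem epsL_star (h : IsTreeBrace Mh star) (X Y : Forest R) :
    epsL (star X Y) = emp X * emp Y := by
  rw [star_rec h]
  simp only [map_add, map_smul, map_spl, epsL_catL, spl_zero, add_zero]
  simp [epsL]

theorem piL_star (h : IsTreeBrace Mh star) (X Y : Forest R) :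
    piL (star X Y) = MextF Mh X Y := by
  rw [star_rec h]
  simp only [map_add, map_smul, map_spl, piL_catL, epsL_star h]
  rw [spl_right, spl_right]
  · simp [piL]
  · intro r s hs; cases s <;> simp at hs ⊢
  · intro p q hq
    refine (spl_congr _ fun r s _ => ?_).trans (spl_zero Y)
    cases q <;> simp at hq ⊢

theorem M_decomp (u v : ForestMod K R) :
    bil (MextF Mh) u v = epsL u • piL v + bil (MextF Mh) (iotaL (piL u)) v := by
  have : bil (MextF Mh) = (LinearMap.lsmul K _ ∘ₗ epsL).compl₂ piL +
      bil (MextF Mh) ∘ₗ iotaL ∘ₗ piL := by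
    refine ext_forest_forest _ _ fun X Y => ?_
    rcases X with _ | ⟨x, _ | ⟨x', X⟩⟩ <;> rcases Y with _ | ⟨y, _ | ⟨y', Y⟩⟩ <;>
      simp [bil, epsL, piL, iotaL, MextF, LinearMap.compl₂_apply]
  exact LinearMap.congr_fun (LinearMap.congr_fun this u) v

theorem M_graft (h : IsTreeBrace Mh star) (x : R) (u v : ForestMod K R) :
    bil (MextF Mh) (iotaL (Finsupp.lmapDomain K K (Bplus x) u)) v =
      Finsupp.lmapDomain K K (Bplus x) (bil star u v) := by
  have : bil (MextF Mh) ∘ₗ iotaL ∘ₗ Finsupp.lmapDomain K K (Bplus x) =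
      (bil star).compr₂ (Finsupp.lmapDomain K K (Bplus x)) := by
    ext1 X; ext1; ext1 Y; ext1
    simp [bil, iotaL, MextF, h.1]
  exact LinearMap.congr_fun (LinearMap.congr_fun this u) v

theorem bil_star_left (h : IsTreeBrace Mh star) (a : ForestMod K R) (Z : Forest R) :
    bil star a (Finsupp.single Z 1) = (epsL a * emp Z : K) • Finsupp.single [] 1 +
      spl Z fun r s => TensorProduct.lift
        ((catL.compl₁₂ ((bil (MextF Mh)).flip (Finsupp.single r 1))
          ((bil star).flip (Finsupp.single s 1)))) (decL a) := by
  induction a using Finsupp.induction_linear with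
  | zero => simp [spl_zero]
  | add a b ha hb => 
    simp only [map_add, LinearMap.add_apply, ha, hb, spl_add, add_mul, add_smul]; abel
  | single X c =>
    rw [← mul_one c, ← smul_eq_mul c, ← Finsupp.smul_single]
    simp only [map_smul, LinearMap.smul_apply, bil_single]
    rw [star_rec h]
    simp only [decL_single, map_spl, TensorProduct.lift.tmul, LinearMap.compl₁₂_apply,
      LinearMap.flip_apply, bil_single]
    rw [spl_comm, smul_add]
    congr 1
    · simp [epsL, mul_smul]
    · simp [spl, Finset.smul_sum]

theorem bil_star_right (h : IsTreeBrace Mh star) (X : Forest R) (a : ForestMod K R) :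
    bil star (Finsupp.single X 1) a = (emp X * epsL a : K) • Finsupp.single [] 1 +
      spl X fun p q => TensorProduct.lift
        ((catL.compl₁₂ (bil (MextF Mh) (Finsupp.single p 1))
          (bil star (Finsupp.single q 1)))) (decL a) := by
  induction a using Finsupp.induction_linear with
  | zero => simp [spl_zero]
  | add a b ha hb => 
    simp only [map_add, ha, hb, spl_add, mul_add, add_smul]; abel
  | single Y c =>
    rw [← mul_one c, ← smul_eq_mul c, ← Finsupp.smul_single]
    simp only [map_smul, bil_single]
    rw [star_rec h]
    simp only [decL_single, map_spl, TensorProduct.lift.tmul, LinearMap.compl₁₂_apply,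
      bil_single]
    rw [smul_add]
    congr 1
    · simp [epsL, mul_smul, smul_smul, mul_left_comm]
    · simp [spl, Finset.smul_sum]

theorem assoc_basis (h : IsTreeBrace Mh star) (n : ℕ) : ∀ X Y Z : Forest R,
    sizeOf X + Y.length + Z.length ≤ n →
    bil star (star X Y) (Finsupp.single Z 1) = bil star (Finsupp.single X 1) (star Y Z) := by
  induction n using Nat.strong_induction_on with
  | _ n ih =>
  intro X Y Z hn
  have sz : ∀ p q : Forest R, sizeOf (p ++ q) + 1 = sizeOf p + sizeOf q := by
    intro p q
    induction p with
    | nil => simp; omega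
    | cons a p ihp => simp; omega
  have hM : ∀ p r t : Forest R, sizeOf p + r.length + t.length ≤ n →
      bil (MextF Mh) (star p r) (Finsupp.single t 1) =
        bil (MextF Mh) (Finsupp.single p 1) (star r t) := by
    intro p r t hp
    rcases p with _ | ⟨⟨x, f⟩, _ | ⟨x', p⟩⟩
    · rw [nil_star h, bil_single, M_decomp (Finsupp.single [] 1), piL_star h]
      simp [epsL, piL, iotaL]
    · rw [M_decomp, epsL_star h, piL_star h]
      have e1 : MextF Mh [PTree.node x f] r =
          Finsupp.lmapDomain K K (Bplus x) (star f r) := h.1 x f r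
      have e2 : (Finsupp.single [PTree.node x f] (1 : K) : ForestMod K R) =
          iotaL (Finsupp.lmapDomain K K (Bplus x) (Finsupp.single f 1)) := by
        simp [iotaL, Bplus]
      rw [e1, e2, M_graft h, M_graft h,
        ih (sizeOf f + r.length + t.length) (by simp at hp; omega) _ _ _ le_rfl]
      simp
    · rw [M_decomp, epsL_star h, piL_star h]
      have : bil (MextF Mh) (Finsupp.single (PTree.node x f :: x' :: p) (1 : K)) = 0 := by
        ext1 Y; ext1; simp [bil, MextF]
      rw [this]
      simp [MextF]
  rw [bil_star_left h, bil_star_right h, epsL_star h, epsL_star h, mul_assoc]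
  congr 1
  simp only [decL_star h _ X Y le_rfl, decL_star h _ Y Z le_rfl, map_spl,
    TensorProduct.lift.tmul, LinearMap.compl₁₂_apply, LinearMap.flip_apply]
  rw [spl_comm]
  refine spl_congr _ fun p q hX => ?_
  rw [spl_comm]
  refine spl_congr _ fun r s hY => spl_congr _ fun t u hZ => ?_
  have h1 := sz p q
  have h0 : ∀ p : Forest R, 1 ≤ sizeOf p := by intro p; cases p <;> simp; omega
  have h2 := h0 q
  have h3 := h0 p
  subst hX hY hZ
  simp only [List.length_append] at hn
  rw [hM p r t (by omega)]
  by_cases hz : p = [] ∧ r = [] ∧ t = []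
  · obtain ⟨rfl, rfl, rfl⟩ := hz
    rw [nil_star h, bil_single]
    simp [MextF]
  · have hlt : 1 < sizeOf p ∨ 0 < r.length ∨ 0 < t.length := by
      by_contra hcon
      apply hz
      push Not at hcon
      refine ⟨?_, ?_, ?_⟩
      · rcases p with _ | ⟨a, p⟩
        · rfl
        · have := h0 p; simp at hcon; omega
      · exact List.length_eq_zero_iff.1 (by omega)
      · exact List.length_eq_zero_iff.1 (by omega)
    rw [ih (sizeOf q + s.length + u.length) (by omega) _ _ _ le_rfl]

theorem catL_supp (a : TreeMod K R) (w : ForestMod K R) (n : ℕ)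
    (hw : w ∈ Finsupp.supported K K {g : Forest R | n ≤ g.length}) :
    catL a w ∈ Finsupp.supported K K {g : Forest R | n + 1 ≤ g.length} := by
  rw [catL, Finsupp.linearCombination_apply, Finsupp.sum, LinearMap.sum_apply]
  refine Submodule.sum_mem _ fun t _ => Submodule.smul_mem _ _ ?_
  have := Submodule.mem_map_of_mem (f := Finsupp.lmapDomain K K (List.cons t)) hw
  rw [Finsupp.lmapDomain_supported] at this
  refine Finsupp.supported_mono ?_ this
  rintro _ ⟨g, hg, rfl⟩
  simpa using hg

theorem star_supp (h : IsTreeBrace Mh star) (n : ℕ) : ∀ X Y : Forest R,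
    X.length + Y.length ≤ n →
    star X Y ∈ Finsupp.supported K K {g : Forest R | X.length ≤ g.length} := by
  induction n using Nat.strong_induction_on with
  | _ n ih =>
  intro X Y hn
  rw [star_rec h]
  refine Submodule.add_mem _ ?_ (Submodule.sum_mem _ fun i _ => Submodule.sum_mem _ fun j _ => ?_)
  · cases X
    · refine Submodule.smul_mem _ _ (Finsupp.single_mem_supported K _ (by simp))
    · simp
  · have hX := List.take_append_drop i X
    have hY := List.take_append_drop j Y
    generalize X.take i = p at *
    generalize X.drop i = q at *
    generalize Y.take j = r at *
    generalize Y.drop j = s at *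
    subst hX hY
    simp only [List.length_append] at hn
    rcases p with _ | ⟨x, _ | ⟨x', p⟩⟩
    · rcases r with _ | ⟨y, r⟩
      · simp [MextF]
      · refine Finsupp.supported_mono ?_ (catL_supp _ _ _
          (ih (q.length + s.length) (by simp at hn; omega) q s le_rfl))
        intro g hg; simp at hg ⊢; omega
    · refine Finsupp.supported_mono ?_ (catL_supp _ _ _
          (ih (q.length + s.length) (by simp at hn; omega) q s le_rfl))
      intro g hg; simp at hg ⊢; omega
    · simp [MextF]

end Aux

/-- Let `R` be a `K`-vector space, `M` the recursive brace
operation on decorated trees, and `⋆` the induced Loday–Ronco product on decorated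
forests.  Then `⋆` is associative with unit the empty forest `1`, the
deconcatenation coproduct `Δ` is multiplicative for `⋆` (so `(T(R^𝒯), ⋆, Δ)` is a
bialgebra), and `⋆` is right-sided: for every `p ≥ 0`,
`(⊕_{n≥p} (R^𝒯)^{⊗n}) ⋆ T(R^𝒯) ⊆ ⊕_{n≥p} (R^𝒯)^{⊗n}`. -/
theorem tree_star_bialgebra_and_right_sided
    (Mh : PTree R → Forest R → TreeMod K R)
    (star : Forest R → Forest R → ForestMod K R)
    (h : IsTreeBrace Mh star) :
    -- associativity
    (∀ a b c : ForestMod K R, starLin star (starLin star a b) c = starLin star a (starLin star b c)) ∧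
    -- the empty forest is the unit
    (∀ a : ForestMod K R,
        starLin star (Finsupp.single ([] : Forest R) 1) a = a ∧
        starLin star a (Finsupp.single ([] : Forest R) 1) = a) ∧
    -- multiplicativity of the deconcatenation coproduct for `⋆`
    (∀ X Y : Forest R,
        deconc (star X Y) =
          ∑ i ∈ Finset.range (X.length + 1), ∑ j ∈ Finset.range (Y.length + 1),
            star (X.take i) (Y.take j) ⊗ₜ[K] star (X.drop i) (Y.drop j)) ∧
    -- the right-sided condition
    (∀ (p : ℕ) (X Y : Forest R), p ≤ X.length →
        ∀ g ∈ (star X Y).support, p ≤ g.length) := by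
  refine ⟨fun a b c => ?_, fun a => ⟨?_, ?_⟩, fun X Y => ?_, fun p X Y hp g hg => ?_⟩
  · simp only [starLin_eq]
    induction a using Finsupp.induction_linear with
    | zero => simp
    | add a a' ha ha' => simp only [map_add, LinearMap.add_apply, ha, ha']
    | single X x =>
      induction b using Finsupp.induction_linear with
      | zero => simp
      | add b b' hb hb' => simp only [map_add, LinearMap.add_apply, hb, hb']
      | single Y y =>
        induction c using Finsupp.induction_linear with
        | zero => simp
        | add c c' hc hc' => simp only [map_add, hc, hc']
        | single Z z =>
          rw [← mul_one x, ← mul_one y, ← mul_one z, ← smul_eq_mul x, ← smul_eq_mul y,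
            ← smul_eq_mul z, ← Finsupp.smul_single, ← Finsupp.smul_single,
            ← Finsupp.smul_single]
          simp only [map_smul, LinearMap.smul_apply, bil_single,
            assoc_basis h _ X Y Z le_rfl]
  · rw [starLin_eq]
    induction a using Finsupp.induction_linear with
    | zero => simp
    | add a a' ha ha' => simp only [map_add, ha, ha']
    | single X x =>
      rw [← mul_one x, ← smul_eq_mul x, ← Finsupp.smul_single, map_smul, bil_single,
        nil_star h]
  · rw [starLin_eq]
    induction a using Finsupp.induction_linear with
    | zero => simp
    | add a a' ha ha' => simp only [map_add, LinearMap.add_apply, ha, ha']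
    | single X x =>
      rw [← mul_one x, ← smul_eq_mul x, ← Finsupp.smul_single, map_smul,
        LinearMap.smul_apply, bil_single, star_nil h _ X le_rfl]
  · rw [deconc_eq, decL_star h _ X Y le_rfl]
    rfl
  · have := star_supp h _ X Y le_rfl
    rw [Finsupp.mem_supported] at this
    exact hp.trans (this hg)

end
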